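/- arXiv:1305.4971 — 2 statements merged into one kernel-verified Lean document; each statement's English description precedes it below -/
import Mathlib

section
/- For every real number s ≥ 0 and every τ in the open interval (1/2, 1) satisfying τ > (Q(s+1) − 1)/Q(s+2), one has Π(τ, λ(s)) ≤ 1 + 10·2^(τ·ξ) + 5·Σ_{j=0}^{⌊s⌋+1} 2^((1−τ)·Q(j+1) − τ·(Ξ−2ξ)·(j+1)). -/
open scoped Classical ENNReal
open Real Set Filter

/-- The quadratic function `Q(s) = q·s²`. -/
noncomputable def Qf (q : ℤ) (s : ℝ) : ℝ := (q : ℝ) * s ^ 2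

/-- The half-open interval `I_s = [2^(Q(s)), 2^(Q(s)) + Q(s+1) − Q(s) + Ξ)`. -/
noncomputable def Iset (q Ξ : ℤ) (s : ℝ) : Set ℝ :=
  Set.Ico ((2 : ℝ) ^ (Qf q s)) ((2 : ℝ) ^ (Qf q s) + Qf q (s + 1) - Qf q s + (Ξ : ℝ))

/-- The half-open interval `J_s = [2^(Q(s)) + Q(s+1) − Q(s) + Ξ, 2^(Q(s+1)))`. -/
noncomputable def Jset (q Ξ : ℤ) (s : ℝ) : Set ℝ :=
  Set.Ico ((2 : ℝ) ^ (Qf q s) + Qf q (s + 1) - Qf q s + (Ξ : ℝ)) ((2 : ℝ) ^ (Qf q (s + 1)))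

/-- The sequence `(x_j)` in `{0,1}`: `x_j = 0` iff `j + 1 ∈ I_s` for some integer `s ≥ 0`. -/
noncomputable def xseq (q Ξ : ℤ) (j : ℕ) : ℕ :=
  if ∃ s : ℕ, ((j : ℝ) + 1) ∈ Iset q Ξ (s : ℝ) then 0 else 1

/-- `N(k) = #{ j ∈ {0,…,k−1} : x_j = 0 }`, with `N(0) = 0`. -/
noncomputable def Nf (q Ξ : ℤ) (k : ℕ) : ℕ :=
  ((Finset.range k).filter (fun j => xseq q Ξ j = 0)).card

/-- `B(0) = 0`, `B(1) = 1`, and for `k ≥ 2`,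
`B(k) = 1 + #{ j ∈ {0,…,k−2} : x_j ≠ x_{j+1} }`. -/
noncomputable def Bf (q Ξ : ℤ) (k : ℕ) : ℕ :=
  if k = 0 then 0
  else 1 + ((Finset.range (k - 1)).filter (fun j => xseq q Ξ j ≠ xseq q Ξ (j + 1))).card

/-- The length `|J_s| = 2^(Q(s+1)) − 2^(Q(s)) − (Q(s+1) − Q(s) + Ξ)` of `J_s`. -/
noncomputable def Jlen (q Ξ : ℤ) (s : ℝ) : ℝ :=
  (2 : ℝ) ^ (Qf q (s + 1)) - (2 : ℝ) ^ (Qf q s) - (Qf q (s + 1) - Qf q s + (Ξ : ℝ))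

/-- `λ(s) = 1/|J_s|`. -/
noncomputable def lamf (q Ξ : ℤ) (s : ℝ) : ℝ := 1 / Jlen q Ξ s

/-- The two-variable series `Π(τ,λ) = Σ_{k≥0} 2^(−λk − τ·N(k) + τ·ξ·B(k))`, a sum in `[0,∞]`. -/
noncomputable def Pi2 (q Ξ : ℤ) (ξ τ lam : ℝ) : ℝ≥0∞ :=
  ∑' k : ℕ, ENNReal.ofReal
    ((2 : ℝ) ^ (-lam * (k : ℝ) - τ * (Nf q Ξ k : ℝ) + τ * ξ * (Bf q Ξ k : ℝ)))


noncomputable def Sn (q : ℤ) (n : ℕ) : ℕ := 2 ^ (q.toNat * n ^ 2)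
noncomputable def Ln (q Ξ : ℤ) (n : ℕ) : ℕ := (q * (2 * n + 1) + Ξ).toNat

lemma Sn_cast (q : ℤ) (hq : 3 ≤ q) (n : ℕ) : ((Sn q n : ℕ) : ℝ) = (2 : ℝ) ^ (Qf q n) := by
  have h : ((q.toNat : ℕ) : ℝ) = (q : ℝ) := by
    have : ((q.toNat : ℕ) : ℤ) = q := Int.toNat_of_nonneg (by omega)
    exact_mod_cast congrArg (fun z : ℤ => (z : ℝ)) this
  unfold Sn Qf
  rw [← h]
  push_cast
  rw [← Real.rpow_natCast]
  push_cast
  rfl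

lemma Ln_int (q Ξ : ℤ) (hq : 3 ≤ q) (h1 : 1 ≤ q + Ξ) (n : ℕ) :
    ((Ln q Ξ n : ℕ) : ℤ) = q * (2 * n + 1) + Ξ := by
  unfold Ln
  apply Int.toNat_of_nonneg
  have : (0 : ℤ) ≤ n := by positivity
  nlinarith

lemma Ln_pos (q Ξ : ℤ) (hq : 3 ≤ q) (h1 : 1 ≤ q + Ξ) (n : ℕ) : 1 ≤ Ln q Ξ n := by
  have h := Ln_int q Ξ hq h1 n
  have : (0 : ℤ) ≤ n := by positivity
  have : (1 : ℤ) ≤ (Ln q Ξ n : ℕ) := by rw [h]; nlinarith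
  exact_mod_cast this

lemma Ln_cast (q Ξ : ℤ) (hq : 3 ≤ q) (h1 : 1 ≤ q + Ξ) (n : ℕ) :
    ((Ln q Ξ n : ℕ) : ℝ) = Qf q ((n : ℝ) + 1) - Qf q n + Ξ := by
  have h := congrArg (fun z : ℤ => (z : ℝ)) (Ln_int q Ξ hq h1 n)
  simp only [Int.cast_natCast] at h
  rw [h]; unfold Qf; push_cast; ring

lemma Jlen_ge (q Ξ : ℤ) (hq : 3 ≤ q)
    (hpow : (q : ℝ) + 1 + (Ξ : ℝ) ≤ (2 : ℝ) ^ ((q : ℝ) - 1)) (s : ℝ) (hs : 0 ≤ s) :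
    1 ≤ Jlen q Ξ s := by
  have hq' : (3 : ℝ) ≤ q := by exact_mod_cast hq
  have hqs : 0 ≤ (q : ℝ) * s := by positivity
  have e : (2 : ℝ) ^ (Qf q (s + 1)) =
      2 * (2 : ℝ) ^ ((q : ℝ) - 1) * (2 : ℝ) ^ (Qf q s) * (2 : ℝ) ^ (2 * (q : ℝ) * s) := by
    have h2 : (2 : ℝ) * (2 : ℝ) ^ ((q : ℝ) - 1) = (2 : ℝ) ^ (q : ℝ) := by
      rw [Real.rpow_sub_one (by norm_num)]; ring
    rw [h2, ← Real.rpow_add (by norm_num), ← Real.rpow_add (by norm_num)]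
    congr 1; unfold Qf; ring
  have hP : (4 : ℝ) ≤ (2 : ℝ) ^ ((q : ℝ) - 1) := by
    calc (4 : ℝ) = (2 : ℝ) ^ (2 : ℝ) := by norm_num
      _ ≤ _ := Real.rpow_le_rpow_of_exponent_le (by norm_num) (by linarith)
  have hA : (1 : ℝ) ≤ (2 : ℝ) ^ (Qf q s) :=
    Real.one_le_rpow (by norm_num) (by unfold Qf; positivity)
  have hu : 1 + (q : ℝ) * s ≤ (2 : ℝ) ^ (2 * (q : ℝ) * s) := by
    rw [Real.rpow_def_of_pos (by norm_num)]
    have := Real.add_one_le_exp (Real.log 2 * (2 * (q : ℝ) * s))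
    have h3 := Real.log_two_gt_d9
    nlinarith
  have hd : Qf q (s + 1) - Qf q s = 2 * ((q : ℝ) * s) + q := by unfold Qf; ring
  unfold Jlen
  rw [e, hd]
  set P := (2 : ℝ) ^ ((q : ℝ) - 1)
  set A := (2 : ℝ) ^ (Qf q s)
  set u := (2 : ℝ) ^ (2 * (q : ℝ) * s)
  set t := (q : ℝ) * s
  have h5 : 2 * P * (1 + t) ≤ 2 * P * u := by
    apply mul_le_mul_of_nonneg_left hu; linarith
  have h6 : 0 ≤ P * t := by positivity
  have h7 : 4 * t ≤ P * t := mul_le_mul_of_nonneg_right hP hqs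
  have h8 : 0 ≤ (A - 1) * (2 * P * u - 1) := mul_nonneg (by linarith) (by nlinarith)
  nlinarith

lemma Jlen_le (q Ξ : ℤ) (hq : 3 ≤ q) (h1 : 1 ≤ q + Ξ) (s : ℝ) (hs : 0 ≤ s) :
    Jlen q Ξ s ≤ (2 : ℝ) ^ (Qf q (s + 1)) := by
  have hq' : (3 : ℝ) ≤ q := by exact_mod_cast hq
  have h1' : (1 : ℝ) ≤ q + Ξ := by exact_mod_cast h1
  have hqs : 0 ≤ (q : ℝ) * s := by positivity
  have hA : (0 : ℝ) ≤ (2 : ℝ) ^ (Qf q s) := by positivity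
  have hd : Qf q (s + 1) - Qf q s = 2 * ((q : ℝ) * s) + q := by unfold Qf; ring
  unfold Jlen
  linarith

lemma Sn_lt (q Ξ : ℤ) (hq : 3 ≤ q) (h1 : 1 ≤ q + Ξ)
    (hpow : (q : ℝ) + 1 + (Ξ : ℝ) ≤ (2 : ℝ) ^ ((q : ℝ) - 1)) (n : ℕ) :
    Sn q n + Ln q Ξ n < Sn q (n + 1) := by
  have h := Jlen_ge q Ξ hq hpow n (by positivity)
  unfold Jlen at h
  have h2 := Sn_cast q hq (n + 1)
  push_cast at h2
  rw [← Ln_cast q Ξ hq h1, ← Sn_cast q hq n, ← h2] at h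
  have : ((Sn q n + Ln q Ξ n : ℕ) : ℝ) < (Sn q (n + 1) : ℕ) := by push_cast; linarith
  exact_mod_cast this

lemma Sn_mono (q : ℤ) {a b : ℕ} (h : a ≤ b) : Sn q a ≤ Sn q b := by
  unfold Sn; gcongr; norm_num

lemma xseq_eq (q Ξ : ℤ) (hq : 3 ≤ q) (h1 : 1 ≤ q + Ξ)
    (hpow : (q : ℝ) + 1 + (Ξ : ℝ) ≤ (2 : ℝ) ^ ((q : ℝ) - 1)) (n j : ℕ)
    (ha : Sn q n ≤ j + 1) (hb : j + 1 < Sn q (n + 1)) :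
    xseq q Ξ j = if j + 1 < Sn q n + Ln q Ξ n then 0 else 1 := by
  have key : ∀ s : ℕ, ((j : ℝ) + 1) ∈ Iset q Ξ (s : ℝ) ↔
      (Sn q s ≤ j + 1 ∧ j + 1 < Sn q s + Ln q Ξ s) := by
    intro s
    unfold Iset
    rw [Set.mem_Ico, add_sub_assoc, add_assoc, ← Ln_cast q Ξ hq h1, ← Sn_cast q hq s]
    norm_cast
  unfold xseq
  congr 1
  simp only [key, eq_iff_iff]
  constructor
  · rintro ⟨s, hs1, hs2⟩
    rcases lt_trichotomy s n with h | h | h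
    · have := Sn_lt q Ξ hq h1 hpow s
      have := Sn_mono q (show s + 1 ≤ n from h)
      omega
    · subst h; exact hs2
    · have := Sn_mono q (show n + 1 ≤ s from h)
      omega
  · intro h
    exact ⟨n, ha, h⟩

lemma Nf_succ (q Ξ : ℤ) (k : ℕ) :
    Nf q Ξ (k + 1) = Nf q Ξ k + if xseq q Ξ k = 0 then 1 else 0 := by
  unfold Nf
  rw [Finset.range_add_one, Finset.filter_insert]
  split_ifs with h
  · rw [Finset.card_insert_of_notMem (by simp)]
  · rfl

lemma Bf_succ (q Ξ : ℤ) (k : ℕ) :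
    Bf q Ξ (k + 2) = Bf q Ξ (k + 1) + if xseq q Ξ k ≠ xseq q Ξ (k + 1) then 1 else 0 := by
  unfold Bf
  simp only [Nat.add_eq_zero_iff, OfNat.ofNat_ne_zero, and_false, if_false, one_ne_zero]
  rw [show k + 2 - 1 = k + 1 by omega, show k + 1 - 1 = k by omega]
  rw [Finset.range_add_one, Finset.filter_insert]
  split_ifs with h
  · rw [Finset.card_insert_of_notMem (by simp)]; rfl
  · rfl

lemma NB (q Ξ : ℤ) (hq : 3 ≤ q) (h1 : 1 ≤ q + Ξ)
    (hpow : (q : ℝ) + 1 + (Ξ : ℝ) ≤ (2 : ℝ) ^ ((q : ℝ) - 1)) (j : ℕ) : ∀ n : ℕ,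
    (Sn q n ≤ j + 1 → j + 1 < Sn q n + Ln q Ξ n →
      (Nf q Ξ (j + 1) : ℤ) = q * n ^ 2 + Ξ * n + (j + 1 - Sn q n) + 1 ∧
        Bf q Ξ (j + 1) = 2 * n + 1) ∧
    (Sn q n + Ln q Ξ n ≤ j + 1 → j + 1 < Sn q (n + 1) →
      (Nf q Ξ (j + 1) : ℤ) = q * (n + 1) ^ 2 + Ξ * (n + 1) ∧
        Bf q Ξ (j + 1) = 2 * n + 2) := by
  have hS0 : Sn q 0 = 1 := by simp [Sn]
  induction j with
  | zero =>
    intro n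
    have hlp := Ln_pos q Ξ hq h1 n
    have hs := Sn_lt q Ξ hq h1 hpow n
    have hs1 : 1 ≤ Sn q n := Nat.one_le_two_pow
    refine ⟨fun ha hb => ?_, fun ha hb => by omega⟩
    have hn : n = 0 := by
      by_contra hne
      have h2 := Sn_lt q Ξ hq h1 hpow 0
      have := Sn_mono q (show 0 + 1 ≤ n by omega)
      omega
    subst hn
    have hx := xseq_eq q Ξ hq h1 hpow 0 0 ha (by omega)
    rw [if_pos hb] at hx
    rw [Nf_succ, if_pos hx]
    constructor
    · simp [Nf, hS0]
    · simp [Bf]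
  | succ j ih =>
    intro n
    have hlp := Ln_pos q Ξ hq h1 n
    have hl := Ln_int q Ξ hq h1 n
    have hs := Sn_lt q Ξ hq h1 hpow n
    obtain ⟨ih1, ih2⟩ := ih n
    constructor
    · intro ha hb
      have hx := xseq_eq q Ξ hq h1 hpow n (j + 1) ha (by omega)
      rw [if_pos hb] at hx
      rw [Nf_succ, if_pos hx, Bf_succ]
      by_cases hc : Sn q n ≤ j + 1
      · have hx' := xseq_eq q Ξ hq h1 hpow n j hc (by omega)
        rw [if_pos (by omega)] at hx'
        obtain ⟨h3, h4⟩ := ih1 hc (by omega)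
        rw [hx, hx', h4]
        push_cast
        rw [h3]
        exact ⟨by ring, by simp⟩
      · obtain ⟨m, rfl⟩ : ∃ m, n = m + 1 := by
          refine ⟨n - 1, ?_⟩
          have : n ≠ 0 := by rintro rfl; omega
          omega
        have hm := Sn_lt q Ξ hq h1 hpow m
        have hx' := xseq_eq q Ξ hq h1 hpow m j (by omega) (by omega)
        rw [if_neg (by omega)] at hx'
        obtain ⟨h3, h4⟩ := (ih m).2 (by omega) (by omega)
        rw [hx, hx', h4]
        have he : Sn q (m + 1) = j + 1 + 1 := by omega
        rw [he]
        push_cast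
        rw [h3]
        exact ⟨by ring, by simp; ring⟩
    · intro ha hb
      have hx := xseq_eq q Ξ hq h1 hpow n (j + 1) (by omega) (by omega)
      rw [if_neg (by omega)] at hx
      rw [Nf_succ, if_neg (by omega), Bf_succ]
      by_cases hc : Sn q n + Ln q Ξ n ≤ j + 1
      · have hx' := xseq_eq q Ξ hq h1 hpow n j (by omega) (by omega)
        rw [if_neg (by omega)] at hx'
        obtain ⟨h3, h4⟩ := ih2 hc (by omega)
        rw [hx, hx', h4]
        exact ⟨by simpa using h3, by simp⟩
      · have hx' := xseq_eq q Ξ hq h1 hpow n j (by omega) (by omega)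
        rw [if_pos (by omega)] at hx'
        obtain ⟨h3, h4⟩ := ih1 (by omega) (by omega)
        rw [hx, hx', h4]
        refine ⟨?_, by simp⟩
        have he : (Sn q n : ℤ) + Ln q Ξ n = j + 1 + 1 := by
          have : Sn q n + Ln q Ξ n = j + 1 + 1 := by omega
          exact_mod_cast this
        push_cast
        rw [h3]
        rw [hl] at he
        linear_combination -he

lemma geo_le (r : ℝ) (h0 : 0 ≤ r) (h1 : r < 1) (n : ℕ) :
    ∑ i ∈ Finset.range n, r ^ i ≤ 1 / (1 - r) := by
  rw [one_div, ← tsum_geometric_of_lt_one h0 h1]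
  exact (summable_geometric_of_lt_one h0 h1).sum_le_tsum _ (fun i _ => by positivity)

/-- Contribution of the block `I_n`. -/
lemma I_block (q Ξ : ℤ) (hq : 3 ≤ q) (h1 : 1 ≤ q + Ξ)
    (hpow : (q : ℝ) + 1 + (Ξ : ℝ) ≤ (2 : ℝ) ^ ((q : ℝ) - 1))
    (ξ : ℝ) (hξ1 : 1 ≤ (Ξ : ℝ) - 2 * ξ) (lam : ℝ) (hlam : 0 ≤ lam) (τ : ℝ) (hτ : 1 / 2 < τ)
    (n : ℕ) :
    ∑ k ∈ Finset.Ico (Sn q n) (Sn q n + Ln q Ξ n),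
      (2 : ℝ) ^ (-lam * (k : ℝ) - τ * (Nf q Ξ k : ℝ) + τ * ξ * (Bf q Ξ k : ℝ)) ≤
    3 * (2 : ℝ) ^ (τ * ξ) * (1 / 4) ^ n := by
  have hq' : (3 : ℝ) ≤ q := by exact_mod_cast hq
  have hS1 : 1 ≤ Sn q n := Nat.one_le_two_pow
  rw [Finset.sum_Ico_eq_sum_range, Nat.add_sub_cancel_left]
  have hterm : ∀ i ∈ Finset.range (Ln q Ξ n),
      (2 : ℝ) ^ (-lam * ((Sn q n + i : ℕ) : ℝ) - τ * (Nf q Ξ (Sn q n + i) : ℝ)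
        + τ * ξ * (Bf q Ξ (Sn q n + i) : ℝ)) ≤
      (2 : ℝ) ^ (τ * ξ) * (1 / 4) ^ n * (5 / 7) * (5 / 7) ^ i := by
    intro i hi
    rw [Finset.mem_range] at hi
    obtain ⟨j, hj⟩ : ∃ j, Sn q n + i = j + 1 := ⟨Sn q n + i - 1, by omega⟩
    obtain ⟨hN, hB⟩ := (NB q Ξ hq h1 hpow j n).1 (by omega) (by omega)
    have hji : (j : ℤ) + 1 - Sn q n = i := by
      have : ((Sn q n + i : ℕ) : ℤ) = ((j + 1 : ℕ) : ℤ) := by rw [hj]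
      push_cast at this; linarith
    rw [hji] at hN
    have hN' : (Nf q Ξ (j + 1) : ℝ) = q * (n : ℝ) ^ 2 + Ξ * n + i + 1 := by exact_mod_cast hN
    rw [hj, hN', hB]
    have e1 : (1 / 4 : ℝ) ^ n = (2 : ℝ) ^ (-(2 * (n : ℝ))) := by
      rw [Real.rpow_neg (by norm_num), Real.rpow_mul (by norm_num), Real.rpow_natCast,
        one_div, inv_pow]
      norm_num
    have e2 : (2 : ℝ) ^ (-(1 / 2) : ℝ) ≤ 5 / 7 := by
      rw [Real.rpow_neg (by norm_num), ← Real.sqrt_eq_rpow]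
      rw [inv_le_comm₀ (by positivity) (by norm_num)]
      apply Real.le_sqrt_of_sq_le; norm_num
    have e3 : (2 : ℝ) ^ (-(1 / 2) * ((i : ℝ) + 1)) ≤ (5 / 7) ^ (i + 1) := by
      rw [Real.rpow_mul (by norm_num)]
      have : ((i : ℝ) + 1) = ((i + 1 : ℕ) : ℝ) := by push_cast; ring
      rw [this, Real.rpow_natCast]
      gcongr
    calc _ ≤ (2 : ℝ) ^ (τ * ξ + -(2 * (n : ℝ)) + -(1 / 2) * ((i : ℝ) + 1)) := by
          apply Real.rpow_le_rpow_of_exponent_le (by norm_num)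
          push_cast
          have hn0 : (0 : ℝ) ≤ n := by positivity
          have hn2 : (n : ℝ) ≤ (n : ℝ) ^ 2 := by exact_mod_cast Nat.le_self_pow (by norm_num) n
          have hi0 : (0 : ℝ) ≤ i := by positivity
          have hj0 : 0 ≤ lam * ((j : ℝ) + 1) := by positivity
          have a1 : 3 * (n : ℝ) ≤ q * (n : ℝ) ^ 2 := by nlinarith
          have a2 : (n : ℝ) ≤ (Ξ - 2 * ξ) * n := by nlinarith
          have a3 : 1 / 2 * (4 * (n : ℝ)) ≤ τ * (q * (n : ℝ) ^ 2 + (Ξ - 2 * ξ) * n) := by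
            apply mul_le_mul hτ.le (by linarith) (by positivity) (by linarith)
          have a4 : 1 / 2 * ((i : ℝ) + 1) ≤ τ * ((i : ℝ) + 1) := by
            apply mul_le_mul_of_nonneg_right hτ.le (by positivity)
          nlinarith
      _ ≤ _ := by
          rw [Real.rpow_add (by norm_num), Real.rpow_add (by norm_num), ← e1]
          rw [mul_assoc _ (5 / 7 : ℝ), ← pow_succ']
          gcongr
  refine (Finset.sum_le_sum hterm).trans ?_
  rw [← Finset.mul_sum]
  have hg := geo_le (5 / 7) (by norm_num) (by norm_num) (Ln q Ξ n)
  have hp : 0 ≤ (2 : ℝ) ^ (τ * ξ) * (1 / 4) ^ n := by positivity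
  norm_num at hg
  nlinarith

/-- Value of the summand on the block `J_n`. -/
lemma J_term (q Ξ : ℤ) (hq : 3 ≤ q) (h1 : 1 ≤ q + Ξ)
    (hpow : (q : ℝ) + 1 + (Ξ : ℝ) ≤ (2 : ℝ) ^ ((q : ℝ) - 1))
    (ξ : ℝ) (lam τ : ℝ) (n k : ℕ) (ha : Sn q n + Ln q Ξ n ≤ k) (hb : k < Sn q (n + 1)) :
    (2 : ℝ) ^ (-lam * (k : ℝ) - τ * (Nf q Ξ k : ℝ) + τ * ξ * (Bf q Ξ k : ℝ)) =
    (2 : ℝ) ^ (-τ * Qf q ((n : ℝ) + 1) - τ * ((Ξ : ℝ) - 2 * ξ) * ((n : ℝ) + 1)) *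
      ((2 : ℝ) ^ (-lam)) ^ k := by
  have hS1 : 1 ≤ Sn q n := Nat.one_le_two_pow
  obtain ⟨j, rfl⟩ : ∃ j, k = j + 1 := ⟨k - 1, by omega⟩
  obtain ⟨hN, hB⟩ := (NB q Ξ hq h1 hpow j n).2 ha hb
  have hN' : (Nf q Ξ (j + 1) : ℝ) = q * ((n : ℝ) + 1) ^ 2 + Ξ * (n + 1) := by exact_mod_cast hN
  rw [hN', hB, ← Real.rpow_natCast ((2 : ℝ) ^ (-lam)), ← Real.rpow_mul (by norm_num),
    ← Real.rpow_add (by norm_num)]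
  congr 1
  unfold Qf
  push_cast
  ring

/-- Contribution of the block `J_n`, trivial bound. -/
lemma J_block_small (q Ξ : ℤ) (hq : 3 ≤ q) (h1 : 1 ≤ q + Ξ)
    (hpow : (q : ℝ) + 1 + (Ξ : ℝ) ≤ (2 : ℝ) ^ ((q : ℝ) - 1))
    (ξ : ℝ) (lam : ℝ) (hlam : 0 ≤ lam) (τ : ℝ) (n : ℕ) :
    ∑ k ∈ Finset.Ico (Sn q n + Ln q Ξ n) (Sn q (n + 1)),
      (2 : ℝ) ^ (-lam * (k : ℝ) - τ * (Nf q Ξ k : ℝ) + τ * ξ * (Bf q Ξ k : ℝ)) ≤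
    (2 : ℝ) ^ ((1 - τ) * Qf q ((n : ℝ) + 1) - τ * ((Ξ : ℝ) - 2 * ξ) * ((n : ℝ) + 1)) := by
  set D := (2 : ℝ) ^ (-τ * Qf q ((n : ℝ) + 1) - τ * ((Ξ : ℝ) - 2 * ξ) * ((n : ℝ) + 1)) with hD
  have hr : (2 : ℝ) ^ (-lam) ≤ 1 :=
    Real.rpow_le_one_of_one_le_of_nonpos (by norm_num) (by linarith)
  have hD0 : 0 < D := by positivity
  have : ∀ k ∈ Finset.Ico (Sn q n + Ln q Ξ n) (Sn q (n + 1)),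
      (2 : ℝ) ^ (-lam * (k : ℝ) - τ * (Nf q Ξ k : ℝ) + τ * ξ * (Bf q Ξ k : ℝ)) ≤ D := by
    intro k hk
    rw [Finset.mem_Ico] at hk
    rw [J_term q Ξ hq h1 hpow ξ lam τ n k hk.1 hk.2]
    exact mul_le_of_le_one_right hD0.le (pow_le_one₀ (by positivity) hr)
  refine (Finset.sum_le_card_nsmul _ _ D this).trans ?_
  rw [nsmul_eq_mul, Nat.card_Ico]
  have h2 := Sn_cast q hq (n + 1)
  push_cast at h2
  calc _ ≤ ((Sn q (n + 1) : ℕ) : ℝ) * D := by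
        gcongr; omega
    _ = _ := by
        rw [h2, hD, ← Real.rpow_add (by norm_num)]
        congr 1; ring

/-- Contribution of the block `J_n` for large `n`. -/
lemma J_block_large (q Ξ : ℤ) (hq : 3 ≤ q) (h1 : 1 ≤ q + Ξ)
    (hpow : (q : ℝ) + 1 + (Ξ : ℝ) ≤ (2 : ℝ) ^ ((q : ℝ) - 1))
    (ξ : ℝ) (hξ1 : 1 ≤ (Ξ : ℝ) - 2 * ξ) (s : ℝ) (hs : 0 ≤ s)
    (τ : ℝ) (hτ : 1 / 2 < τ) (hτ1 : τ < 1)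
    (hτs : (Qf q (s + 1) - 1) / Qf q (s + 2) < τ) (i : ℕ) :
    ∑ k ∈ Finset.Ico (Sn q (Nat.floor s + 2 + i) + Ln q Ξ (Nat.floor s + 2 + i))
        (Sn q (Nat.floor s + 2 + i + 1)),
      (2 : ℝ) ^ (-lamf q Ξ s * (k : ℝ) - τ * (Nf q Ξ k : ℝ) + τ * ξ * (Bf q Ξ k : ℝ)) ≤
    3 * (2 : ℝ) ^ ((1 - τ) * Qf q (((Nat.floor s + 1 : ℕ) : ℝ) + 1)
      - τ * ((Ξ : ℝ) - 2 * ξ) * (((Nat.floor s + 1 : ℕ) : ℝ) + 1)) * (1 / 4) ^ i := by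
  have hq' : (3 : ℝ) ≤ q := by exact_mod_cast hq
  set m := Nat.floor s with hm
  have hsm : s < m + 1 := Nat.lt_floor_add_one s
  have hJ1 := Jlen_ge q Ξ hq hpow s hs
  have hJ2 := Jlen_le q Ξ hq h1 s hs
  set lam := lamf q Ξ s with hlam
  have hl0 : 0 < lam := by rw [hlam]; unfold lamf; positivity
  have hl1 : lam ≤ 1 := by
    rw [hlam]; unfold lamf; rw [div_le_one (by linarith)]; exact hJ1
  have hr : (2 : ℝ) ^ (-lam) ≤ 1 - lam / 2 := by
    have := _root_.rpow_one_add_le_one_add_mul_self (s := -(1 / 2)) (by norm_num) hl0.le hl1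
    rw [Real.rpow_neg (by norm_num), ← Real.inv_rpow (by norm_num)]
    norm_num at this ⊢
    linarith
  have hr0 : 0 ≤ (2 : ℝ) ^ (-lam) := by positivity
  rw [Finset.sum_congr rfl (fun k hk => J_term q Ξ hq h1 hpow ξ lam τ _ k
    (Finset.mem_Ico.1 hk).1 (Finset.mem_Ico.1 hk).2), ← Finset.mul_sum]
  have hsum : ∑ k ∈ Finset.Ico (Sn q (m + 2 + i) + Ln q Ξ (m + 2 + i)) (Sn q (m + 2 + i + 1)),
      ((2 : ℝ) ^ (-lam)) ^ k ≤ 2 * (2 : ℝ) ^ (Qf q (s + 1)) := by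
    calc _ ≤ ∑ k ∈ Finset.range (Sn q (m + 2 + i + 1)), ((2 : ℝ) ^ (-lam)) ^ k := by
          apply Finset.sum_le_sum_of_subset_of_nonneg
          · intro k hk
            rw [Finset.mem_Ico] at hk
            exact Finset.mem_range.2 hk.2
          · intro k _ _; positivity
      _ ≤ 1 / (1 - (2 : ℝ) ^ (-lam)) := geo_le _ hr0 (by linarith) _
      _ ≤ 1 / (lam / 2) := by
          apply one_div_le_one_div_of_le <;> linarith
      _ = 2 * Jlen q Ξ s := by
          rw [hlam]; unfold lamf
          have : Jlen q Ξ s ≠ 0 := by linarith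
          field_simp
      _ ≤ _ := by linarith
  refine (mul_le_mul_of_nonneg_left hsum (by positivity)).trans ?_
  have e1 : (1 / 4 : ℝ) ^ i = (2 : ℝ) ^ (-(2 * (i : ℝ))) := by
    rw [Real.rpow_neg (by norm_num), Real.rpow_mul (by norm_num), Real.rpow_natCast,
      one_div, inv_pow]
    norm_num
  have e2 : 2 * (2 : ℝ) ^ ((1 / 2) : ℝ) ≤ 3 := by
    rw [← Real.sqrt_eq_rpow]
    have : √(2 : ℝ) ≤ 3 / 2 := by
      apply Real.sqrt_le_iff.2; norm_num
    linarith
  have hQ2 : 0 < Qf q (s + 2) := by unfold Qf; positivity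
  rw [div_lt_iff₀ hQ2] at hτs
  have hi0 : (0 : ℝ) ≤ i := by positivity
  have hm0 : (0 : ℝ) ≤ m := by positivity
  have hQ3 : Qf q (s + 2) + 4 * i ≤ Qf q (((m + 2 + i : ℕ) : ℝ) + 1) := by
    unfold Qf
    push_cast
    have b1 : (s + 2) ^ 2 + 2 * (i : ℝ) ≤ ((m : ℝ) + 2 + i + 1) ^ 2 := by
      nlinarith [mul_nonneg hm0 hi0]
    nlinarith [mul_le_mul_of_nonneg_left b1 (show (0 : ℝ) ≤ q by linarith)]
  have hτ0 : 0 < τ := by linarith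
  have hQ4 : τ * (Qf q (s + 2) + 4 * i) ≤ τ * Qf q (((m + 2 + i : ℕ) : ℝ) + 1) :=
    mul_le_mul_of_nonneg_left hQ3 hτ0.le
  have hQ5 : 2 * (i : ℝ) ≤ τ * (4 * i) := by nlinarith
  have hQ6 : 0 ≤ (1 - τ) * Qf q (((m + 1 : ℕ) : ℝ) + 1) := by
    apply mul_nonneg (by linarith); unfold Qf; positivity
  have hc : 1 / 2 ≤ τ * ((Ξ : ℝ) - 2 * ξ) := by nlinarith
  have hc2 : τ * ((Ξ : ℝ) - 2 * ξ) * (((m + 1 : ℕ) : ℝ) + 1) + 1 / 2 ≤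
      τ * ((Ξ : ℝ) - 2 * ξ) * (((m + 2 + i : ℕ) : ℝ) + 1) := by
    push_cast
    nlinarith [mul_nonneg (show 0 ≤ τ * ((Ξ : ℝ) - 2 * ξ) by linarith) hi0]
  set E := (1 - τ) * Qf q (((m + 1 : ℕ) : ℝ) + 1)
    - τ * ((Ξ : ℝ) - 2 * ξ) * (((m + 1 : ℕ) : ℝ) + 1) with hE
  calc _ = 2 * (2 : ℝ) ^ (-τ * Qf q (((m + 2 + i : ℕ) : ℝ) + 1)
        - τ * ((Ξ : ℝ) - 2 * ξ) * (((m + 2 + i : ℕ) : ℝ) + 1) + Qf q (s + 1)) := by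
        rw [Real.rpow_add (by norm_num)]; ring
    _ ≤ 2 * (2 : ℝ) ^ ((1 / 2 : ℝ) + E + -(2 * (i : ℝ))) := by
        apply mul_le_mul_of_nonneg_left _ (by norm_num)
        apply Real.rpow_le_rpow_of_exponent_le (by norm_num)
        linarith
    _ = (2 * (2 : ℝ) ^ (1 / 2 : ℝ)) * (2 : ℝ) ^ E * (1 / 4) ^ i := by
        rw [Real.rpow_add (by norm_num), Real.rpow_add (by norm_num), ← e1]; ring
    _ ≤ _ := by gcongr

theorem stmt5 (Ξ q : ℤ) (hq : 3 ≤ q) (hqΞ : 1 ≤ q + Ξ)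
    (hpow : (q : ℝ) + 1 + (Ξ : ℝ) ≤ (2 : ℝ) ^ ((q : ℝ) - 1))
    (ξ : ℝ) (hξ1 : 1 ≤ (Ξ : ℝ) - 2 * ξ) (hξ2 : (Ξ : ℝ) - 2 * ξ ≤ 2) :
    ∀ s : ℝ, 0 ≤ s → ∀ τ : ℝ, 1 / 2 < τ → τ < 1 →
      (Qf q (s + 1) - 1) / Qf q (s + 2) < τ →
      Pi2 q Ξ ξ τ (lamf q Ξ s) ≤
        ENNReal.ofReal (1 + 10 * (2 : ℝ) ^ (τ * ξ)
          + 5 * ∑ j ∈ Finset.range (Nat.floor s + 2),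
              (2 : ℝ) ^ ((1 - τ) * Qf q ((j : ℝ) + 1)
                - τ * ((Ξ : ℝ) - 2 * ξ) * ((j : ℝ) + 1))) := by
  intro s hs τ hτ hτ1 hτs
  set lam := lamf q Ξ s with hlam
  have hl0 : 0 ≤ lam := by
    have := Jlen_ge q Ξ hq hpow s hs
    rw [hlam]; unfold lamf; positivity
  set m := Nat.floor s with hm
  set f : ℕ → ℝ := fun k =>
    (2 : ℝ) ^ (-lam * (k : ℝ) - τ * (Nf q Ξ k : ℝ) + τ * ξ * (Bf q Ξ k : ℝ)) with hf
  set a : ℕ → ℝ := fun j => (2 : ℝ) ^ ((1 - τ) * Qf q ((j : ℝ) + 1)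
                - τ * ((Ξ : ℝ) - 2 * ξ) * ((j : ℝ) + 1)) with ha
  have ha0 : ∀ j, 0 < a j := fun j => by simp only [ha]; positivity
  have hf0 : ∀ k, 0 ≤ f k := fun k => by simp only [hf]; positivity
  have hf00 : f 0 = 1 := by simp [hf, Nf, Bf]
  set C : ℕ → ℝ := fun n => if n < m + 2 then a n else 3 * a (m + 1) * (1 / 4) ^ (n - (m + 2))
    with hC
  have hC0 : ∀ n, 0 ≤ C n := by
    intro n
    have := (ha0 n).le
    have := (ha0 (m + 1)).le
    simp only [hC]; split_ifs <;> positivity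
  have hblock : ∀ n, ∑ k ∈ Finset.Ico (Sn q n) (Sn q (n + 1)), f k ≤
      3 * (2 : ℝ) ^ (τ * ξ) * (1 / 4) ^ n + C n := by
    intro n
    rw [← Finset.sum_Ico_consecutive f (Nat.le_add_right (Sn q n) (Ln q Ξ n))
      (Sn_lt q Ξ hq hqΞ hpow n).le]
    apply add_le_add (I_block q Ξ hq hqΞ hpow ξ hξ1 lam hl0 τ hτ n)
    simp only [hC]
    split_ifs with h
    · exact J_block_small q Ξ hq hqΞ hpow ξ lam hl0 τ n
    · obtain ⟨i, rfl⟩ : ∃ i, n = m + 2 + i := ⟨n - (m + 2), by omega⟩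
      rw [Nat.add_sub_cancel_left]
      exact J_block_large q Ξ hq hqΞ hpow ξ hξ1 s hs τ hτ hτ1 hτs i
  have hpartial : ∀ M, ∑ k ∈ Finset.range (Sn q M), f k ≤
      1 + ∑ n ∈ Finset.range M, (3 * (2 : ℝ) ^ (τ * ξ) * (1 / 4) ^ n + C n) := by
    intro M
    induction M with
    | zero =>
      have : Sn q 0 = 1 := by simp [Sn]
      rw [this]; simp [hf00]
    | succ M ih =>
      rw [← Finset.sum_range_add_sum_Ico f (Sn_mono q (Nat.le_succ M)),
        Finset.sum_range_succ _ M]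
      have := hblock M
      simp only [Nat.succ_eq_add_one] at *
      linarith
  have hCsum : ∀ M, ∑ n ∈ Finset.range M, C n ≤ 5 * ∑ j ∈ Finset.range (m + 2), a j := by
    intro M
    have h1 : ∑ n ∈ Finset.range M, C n ≤ ∑ n ∈ Finset.range (m + 2 + M), C n := by
      apply Finset.sum_le_sum_of_subset_of_nonneg
      · intro k hk
        simp only [Finset.mem_range] at *
        omega
      · intro k _ _; exact hC0 k
    rw [Finset.sum_range_add] at h1
    have h2 : ∑ n ∈ Finset.range (m + 2), C n = ∑ n ∈ Finset.range (m + 2), a n := by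
      apply Finset.sum_congr rfl
      intro n hn
      simp only [hC, if_pos (Finset.mem_range.1 hn)]
    have h3 : ∑ i ∈ Finset.range M, C (m + 2 + i) =
        3 * a (m + 1) * ∑ i ∈ Finset.range M, (1 / 4 : ℝ) ^ i := by
      rw [Finset.mul_sum]
      apply Finset.sum_congr rfl
      intro i _
      simp only [hC]
      rw [if_neg (by omega), Nat.add_sub_cancel_left]
    have h4 := geo_le (1 / 4) (by norm_num) (by norm_num) M
    have h5 : a (m + 1) ≤ ∑ j ∈ Finset.range (m + 2), a j :=
      Finset.single_le_sum (f := a) (fun j _ => (ha0 j).le) (Finset.mem_range.2 (by omega))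
    have h6 : 3 * a (m + 1) * ∑ i ∈ Finset.range M, (1 / 4 : ℝ) ^ i ≤
        3 * a (m + 1) * (1 / (1 - 1 / 4)) :=
      mul_le_mul_of_nonneg_left h4 (by have := ha0 (m + 1); positivity)
    norm_num at h6 h1 h2 h3 ⊢
    linarith
  unfold Pi2
  apply ENNReal.tsum_le_of_sum_range_le
  intro K
  rw [← ENNReal.ofReal_sum_of_nonneg (fun k _ => hf0 k)]
  apply ENNReal.ofReal_le_ofReal
  have hK : K ≤ Sn q K := by
    unfold Sn
    have h1 : K < 2 ^ K := Nat.lt_two_pow_self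
    have h2 : K ≤ q.toNat * K ^ 2 := by
      have h3 : 1 ≤ q.toNat := by omega
      have h4 : K ≤ K ^ 2 := Nat.le_self_pow (by norm_num) K
      nlinarith
    exact h1.le.trans (Nat.pow_le_pow_right (by norm_num) h2)
  have h1 : ∑ k ∈ Finset.range K, f k ≤ ∑ k ∈ Finset.range (Sn q K), f k := by
    apply Finset.sum_le_sum_of_subset_of_nonneg
    · intro k hk
      simp only [Finset.mem_range] at *
      omega
    · intro k _ _; exact hf0 k
  have h2 := hpartial K
  rw [Finset.sum_add_distrib, ← Finset.mul_sum] at h2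
  have h3 := hCsum K
  have h4 := geo_le (1 / 4) (by norm_num) (by norm_num) K
  have h5 : 3 * (2 : ℝ) ^ (τ * ξ) * ∑ i ∈ Finset.range K, (1 / 4 : ℝ) ^ i ≤
      3 * (2 : ℝ) ^ (τ * ξ) * (1 / (1 - 1 / 4)) :=
    mul_le_mul_of_nonneg_left h4 (by positivity)
  have h6 : 0 < (2 : ℝ) ^ (τ * ξ) := by positivity
  have h7 : (1 : ℝ) / (1 - 1 / 4) = 4 / 3 := by norm_num
  rw [h7] at h5
  linarith
end

section
/- For every τ in the open interval ((q−2)/(q−1), 1) one has Π(τ, 2·2^(−q·((Ξ−2ξ)/(q(1−τ)) − 1)²)) ≤ 10·2^(τ·ξ) + 101. -/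
open scoped Classical ENNReal
open Real Set Filter

/-- Left endpoint of the block `s`. -/
def PP (q s : ℕ) : ℕ := 2 ^ (q * s ^ 2)

/-- Length of `I_s`. -/
def LL (q : ℕ) (Ξ : ℤ) (s : ℕ) : ℕ := ((q : ℤ) * (2 * s + 1) + Ξ).toNat

lemma PP_mono (q : ℕ) {s t : ℕ} (h : s ≤ t) : PP q s ≤ PP q t := by
  unfold PP
  gcongr
  norm_num

lemma LL_cast (q : ℕ) (Ξ : ℤ) (hqΞ : 1 ≤ (q : ℤ) + Ξ) (s : ℕ) :
    (LL q Ξ s : ℤ) = (q : ℤ) * (2 * s + 1) + Ξ := by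
  unfold LL
  apply Int.toNat_of_nonneg
  have : (0 : ℤ) ≤ q * s := by positivity
  nlinarith

lemma LL_pos (q : ℕ) (Ξ : ℤ) (hqΞ : 1 ≤ (q : ℤ) + Ξ) (s : ℕ) : 1 ≤ LL q Ξ s := by
  have h := LL_cast q Ξ hqΞ s
  have : (0 : ℤ) ≤ q * s := by positivity
  have : (1 : ℤ) ≤ LL q Ξ s := by rw [h]; nlinarith
  exact_mod_cast this

lemma PP_LL_lt (q : ℕ) (Ξ : ℤ) (hq : 3 ≤ q) (hqΞ : 1 ≤ (q : ℤ) + Ξ)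
    (hpow : (q : ℤ) + 1 + Ξ ≤ 2 ^ (q - 1)) (s : ℕ) :
    PP q s + LL q Ξ s < PP q (s + 1) := by
  have h := LL_cast q Ξ hqΞ s
  have e : PP q (s + 1) = PP q s * (2 ^ (q - 1) * 2 ^ (2 * q * s + 1)) := by
    unfold PP
    rw [← pow_add, ← pow_add]
    congr 1
    obtain ⟨p, rfl⟩ : ∃ p, q = p + 1 := ⟨q - 1, by omega⟩
    simp only [Nat.add_sub_cancel]
    ring
  have hP : 1 ≤ PP q s := Nat.one_le_two_pow
  have hX : 2 * q * s + 1 < 2 ^ (2 * q * s + 1) := Nat.lt_two_pow_self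
  have hX2 : 2 ≤ 2 ^ (2 * q * s + 1) := by
    calc 2 = 2 ^ 1 := rfl
      _ ≤ _ := Nat.pow_le_pow_right (by norm_num) (by omega)
  have hY2 : 2 ≤ 2 ^ (q - 1) := by
    calc 2 = 2 ^ 1 := rfl
      _ ≤ _ := Nat.pow_le_pow_right (by norm_num) (by omega)
  rw [e]
  generalize 2 ^ (2 * q * s + 1) = X at *
  have hc : ((2 ^ (q - 1) : ℕ) : ℤ) = 2 ^ (q - 1) := by push_cast; rfl
  rw [← hc] at hpow
  generalize 2 ^ (q - 1) = Y at *
  have hXY : X + Y ≤ Y * X := by nlinarith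
  have hL : LL q Ξ s + 2 < X + Y := by
    zify at *
    linarith
  nlinarith

lemma rpow_Qf (q s : ℕ) : (2 : ℝ) ^ (Qf (q : ℤ) (s : ℝ)) = (PP q s : ℝ) := by
  unfold Qf PP
  have e : (((q : ℕ) : ℤ) : ℝ) * (s : ℝ) ^ 2 = ((q * s ^ 2 : ℕ) : ℝ) := by push_cast; ring
  rw [e, Real.rpow_natCast]
  push_cast
  rfl

lemma mem_Iset (q : ℕ) (Ξ : ℤ) (hqΞ : 1 ≤ (q : ℤ) + Ξ) (s j : ℕ) :
    ((j : ℝ) + 1) ∈ Iset (q : ℤ) Ξ (s : ℝ) ↔ PP q s ≤ j + 1 ∧ j + 1 < PP q s + LL q Ξ s := by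
  unfold Iset
  rw [rpow_Qf, Set.mem_Ico]
  have h := LL_cast q Ξ hqΞ s
  have h2 : (LL q Ξ s : ℝ) = (q : ℝ) * (2 * s + 1) + Ξ := by exact_mod_cast h
  have e : (PP q s : ℝ) + Qf (q : ℤ) ((s : ℝ) + 1) - Qf (q : ℤ) (s : ℝ) + (Ξ : ℝ)
      = (PP q s : ℝ) + LL q Ξ s := by
    rw [h2]; unfold Qf; push_cast; ring
  rw [e]
  constructor
  · rintro ⟨a, b⟩; exact ⟨by exact_mod_cast a, by exact_mod_cast b⟩
  · rintro ⟨a, b⟩; exact ⟨by exact_mod_cast a, by exact_mod_cast b⟩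

lemma xseq_block (q : ℕ) (Ξ : ℤ) (hq : 3 ≤ q) (hqΞ : 1 ≤ (q : ℤ) + Ξ)
    (hpow : (q : ℤ) + 1 + Ξ ≤ 2 ^ (q - 1)) (s j : ℕ) (h1 : PP q s ≤ j + 1)
    (h2 : j + 1 < PP q (s + 1)) :
    xseq (q : ℤ) Ξ j = if j + 1 < PP q s + LL q Ξ s then 0 else 1 := by
  unfold xseq
  congr 1
  simp only [mem_Iset q Ξ hqΞ, eq_iff_iff]
  constructor
  · rintro ⟨t, ht1, ht2⟩
    rcases lt_trichotomy t s with h | h | h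
    · have := PP_LL_lt q Ξ hq hqΞ hpow t
      have := PP_mono q (show t + 1 ≤ s from h)
      omega
    · subst h; exact ht2
    · have := PP_mono q (show s + 1 ≤ t from h)
      omega
  · intro h; exact ⟨s, h1, h⟩

lemma NB_I (q : ℕ) (Ξ : ℤ) (hq : 3 ≤ q) (hqΞ : 1 ≤ (q : ℤ) + Ξ)
    (hpow : (q : ℤ) + 1 + Ξ ≤ 2 ^ (q - 1)) (s : ℕ)
    (hN : (Nf q Ξ (PP q s) : ℤ) = q * s ^ 2 + Ξ * s + 1) (hB : Bf q Ξ (PP q s) = 2 * s + 1)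
    (i : ℕ) (hi : i < LL q Ξ s) :
    (Nf q Ξ (PP q s + i) : ℤ) = q * s ^ 2 + Ξ * s + 1 + i ∧ Bf q Ξ (PP q s + i) = 2 * s + 1 := by
  induction i with
  | zero => simp [hN, hB]
  | succ i ih =>
    obtain ⟨ih1, ih2⟩ := ih (by omega)
    have hlt := PP_LL_lt q Ξ hq hqΞ hpow s
    have hP : 1 ≤ PP q s := Nat.one_le_two_pow
    have x1 := xseq_block q Ξ hq hqΞ hpow s (PP q s + i) (by omega) (by omega)
    have x0 := xseq_block q Ξ hq hqΞ hpow s (PP q s + i - 1) (by omega) (by omega)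
    rw [if_pos (by omega)] at x0 x1
    constructor
    · rw [← add_assoc, Nf_succ, x1]; push_cast; rw [ih1]; ring
    · obtain ⟨m, hm⟩ : ∃ m, PP q s + i = m + 1 := ⟨PP q s + i - 1, by omega⟩
      rw [← add_assoc, hm, Bf_succ, ← hm, ih2, x1]
      rw [hm] at x0
      rw [Nat.add_sub_cancel] at x0
      rw [x0]; simp

lemma NB_J (q : ℕ) (Ξ : ℤ) (hq : 3 ≤ q) (hqΞ : 1 ≤ (q : ℤ) + Ξ)
    (hpow : (q : ℤ) + 1 + Ξ ≤ 2 ^ (q - 1)) (s : ℕ)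
    (hN : (Nf q Ξ (PP q s) : ℤ) = q * s ^ 2 + Ξ * s + 1) (hB : Bf q Ξ (PP q s) = 2 * s + 1)
    (i : ℕ) (hi : PP q s + LL q Ξ s + i < PP q (s + 1)) :
    (Nf q Ξ (PP q s + LL q Ξ s + i) : ℤ) = q * (s + 1) ^ 2 + Ξ * (s + 1) ∧
      Bf q Ξ (PP q s + LL q Ξ s + i) = 2 * s + 2 := by
  have hL := LL_pos q Ξ hqΞ s
  have hP : 1 ≤ PP q s := Nat.one_le_two_pow
  induction i with
  | zero =>
    obtain ⟨ih1, ih2⟩ := NB_I q Ξ hq hqΞ hpow s hN hB (LL q Ξ s - 1) (by omega)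
    have hLc := LL_cast q Ξ hqΞ s
    obtain ⟨m, hm⟩ : ∃ m, PP q s + (LL q Ξ s - 1) = m + 1 :=
      ⟨PP q s + (LL q Ξ s - 1) - 1, by omega⟩
    have hm2 : PP q s + LL q Ξ s + 0 = m + 2 := by omega
    have x1 := xseq_block q Ξ hq hqΞ hpow s (m + 1) (by omega) (by omega)
    have x0 := xseq_block q Ξ hq hqΞ hpow s m (by omega) (by omega)
    rw [if_neg (by omega)] at x1
    rw [if_pos (by omega)] at x0
    rw [hm] at ih1 ih2
    rw [hm2]
    constructor
    · rw [show m + 2 = (m + 1) + 1 by rfl, Nf_succ, x1]; push_cast; rw [ih1]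
      push_cast [hL]; rw [hLc]; simp; ring
    · rw [Bf_succ, ih2, x1, x0]; simp
  | succ i ih =>
    obtain ⟨ih1, ih2⟩ := ih (by omega)
    obtain ⟨m, hm⟩ : ∃ m, PP q s + LL q Ξ s + i = m + 1 :=
      ⟨PP q s + LL q Ξ s + i - 1, by omega⟩
    have x1 := xseq_block q Ξ hq hqΞ hpow s (m + 1) (by omega) (by omega)
    rw [if_neg (by omega)] at x1
    rw [hm] at ih1 ih2
    rw [← add_assoc, hm]
    constructor
    · rw [Nf_succ, x1]; push_cast; rw [ih1]; simp
    · have x0 := xseq_block q Ξ hq hqΞ hpow s m (by omega) (by omega)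
      rw [if_neg (by omega)] at x0
      rw [Bf_succ, ih2, x1, x0]; simp

lemma NB_start (q : ℕ) (Ξ : ℤ) (hq : 3 ≤ q) (hqΞ : 1 ≤ (q : ℤ) + Ξ)
    (hpow : (q : ℤ) + 1 + Ξ ≤ 2 ^ (q - 1)) (s : ℕ) :
    (Nf q Ξ (PP q s) : ℤ) = q * s ^ 2 + Ξ * s + 1 ∧ Bf q Ξ (PP q s) = 2 * s + 1 := by
  induction s with
  | zero =>
    have hP : PP q 0 = 1 := by simp [PP]
    have hL := LL_pos q Ξ hqΞ 0
    have hlt := PP_LL_lt q Ξ hq hqΞ hpow 0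
    have x1 := xseq_block q Ξ hq hqΞ hpow 0 0 (by omega) (by omega)
    rw [if_pos (by omega)] at x1
    rw [hP]
    constructor
    · rw [show (1 : ℕ) = 0 + 1 by rfl, Nf_succ, x1]; simp [Nf]
    · simp [Bf]
  | succ s ih =>
    obtain ⟨hN, hB⟩ := ih
    have hlt := PP_LL_lt q Ξ hq hqΞ hpow s
    have hlt2 := PP_LL_lt q Ξ hq hqΞ hpow (s + 1)
    have hL := LL_pos q Ξ hqΞ (s + 1)
    have hL0 := LL_pos q Ξ hqΞ s
    have hP : 1 ≤ PP q s := Nat.one_le_two_pow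
    obtain ⟨h1, h2⟩ := NB_J q Ξ hq hqΞ hpow s hN hB (PP q (s + 1) - 1 - (PP q s + LL q Ξ s))
      (by omega)
    rw [show PP q s + LL q Ξ s + (PP q (s + 1) - 1 - (PP q s + LL q Ξ s)) = PP q (s + 1) - 1
      by omega] at h1 h2
    obtain ⟨m, hm⟩ : ∃ m, PP q (s + 1) = m + 2 := ⟨PP q (s + 1) - 2, by omega⟩
    have x1 := xseq_block q Ξ hq hqΞ hpow (s + 1) (m + 1) (by omega) (by omega)
    have x0 := xseq_block q Ξ hq hqΞ hpow s m (by omega) (by omega)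
    rw [if_pos (by omega)] at x1
    rw [if_neg (by omega)] at x0
    rw [hm] at h1 h2
    rw [hm]
    constructor
    · rw [show m + 2 = (m + 1) + 1 by rfl, Nf_succ, x1]
      rw [show m + 2 - 1 = m + 1 by rfl] at h1
      push_cast; rw [h1]
    · rw [show m + 2 - 1 = m + 1 by rfl] at h2
      rw [Bf_succ, h2, x1, x0]; simp; ring

lemma two_rpow_half : (2 : ℝ) ^ (-(1 / 2) : ℝ) ≤ 3 / 4 := by
  rw [← pow_le_pow_iff_left₀ (by positivity) (by norm_num) (two_ne_zero),
    ← Real.rpow_natCast, ← Real.rpow_mul (by norm_num)]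
  norm_num [Real.rpow_neg_one]

lemma rpow_neg_half_le (n : ℕ) (x : ℝ) (h : (n : ℝ) ≤ x) :
    (2 : ℝ) ^ (-(x / 2)) ≤ (3 / 4) ^ n := by
  calc (2 : ℝ) ^ (-(x / 2)) ≤ (2 : ℝ) ^ ((-(1 / 2) : ℝ) * n) := by
        apply Real.rpow_le_rpow_of_exponent_le (by norm_num); linarith
    _ = ((2 : ℝ) ^ (-(1 / 2) : ℝ)) ^ n := by
        rw [Real.rpow_mul (by norm_num), Real.rpow_natCast]
    _ ≤ _ := pow_le_pow_left₀ (by positivity) two_rpow_half n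

lemma two_rpow_43 : (2 : ℝ) ^ (4 / 3 : ℝ) ≤ 3 := by
  rw [← pow_le_pow_iff_left₀ (by positivity) (by norm_num) (three_ne_zero),
    ← Real.rpow_natCast, ← Real.rpow_mul (by norm_num)]
  norm_num

lemma two_rpow_13 : (3 / 4 : ℝ) ≤ (2 : ℝ) ^ (-(1 / 3) : ℝ) := by
  rw [← pow_le_pow_iff_left₀ (by norm_num) (by positivity) (three_ne_zero),
    ← Real.rpow_natCast ((2 : ℝ) ^ (-(1 / 3) : ℝ)), ← Real.rpow_mul (by norm_num)]
  norm_num [Real.rpow_neg_one]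

lemma two_rpow_ge (x : ℝ) : 1 + 0.69 * x ≤ (2 : ℝ) ^ x ∨ x < 0 := by
  by_cases hx : x < 0
  · right; exact hx
  · left
    push Not at hx
    rw [Real.rpow_def_of_pos (by norm_num)]
    have h1 := Real.add_one_le_exp (Real.log 2 * x)
    have h2 := Real.log_two_gt_d9
    nlinarith

/-- The exponent in case `s ≤ u`. -/
lemma E_small (q d ε u s : ℝ) (hq : 3 ≤ q) (hd1 : 1 ≤ d) (hd2 : d ≤ 2) (hε : 0 < ε)
    (hu : q * ε * u = d) (hs : 1 ≤ s) (hsu : s ≤ u) :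
    q * ε * s ^ 2 - d * s + ε * d * s ≤ 4 / 3 - s / 2 ∨
    q * ε * s ^ 2 - d * s + ε * d * s ≤ 4 / 3 - (u - s) / 2 := by
  have h1 : ε * d * s ≤ 4 / 3 := by
    have : q * (ε * s) ≤ d := by nlinarith
    have : 3 * (ε * s) ≤ d := by nlinarith [mul_pos hε (by linarith : (0 : ℝ) < s)]
    nlinarith [mul_pos hε (by linarith : (0 : ℝ) < s)]
  have hqe : 0 < q * ε := by positivity
  have hupos : 0 < u := by linarith
  have key : q * ε * s ^ 2 - d * s = - (q * ε) * (s * (u - s)) := by rw [← hu]; ring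
  have hus : 0 ≤ u - s := by linarith
  by_cases h : 2 * s ≤ u
  · left
    have : q * ε * (u - s) ≥ 1 / 2 := by nlinarith
    nlinarith
  · right
    push Not at h
    have : q * ε * s ≥ 1 / 2 := by nlinarith
    nlinarith

lemma E_large (q d ε u s : ℝ) (hq : 3 ≤ q) (hd1 : 1 ≤ d) (hd2 : d ≤ 2) (hε : 0 < ε)
    (hu : q * ε * u = d) (hu1 : 1 ≤ u) (hsu : u < s) :
    -(2 * (2 : ℝ) ^ (-q * (u - 1) ^ 2) * 2 ^ (q * (s - 1) ^ 2))
      + (q * ε * s ^ 2 - d * s + ε * d * s) ≤ 2 - (s - u) / 2 := by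
  obtain ⟨δ, rfl⟩ : ∃ δ, s = u + δ := ⟨s - u, by ring⟩
  have hδ : 0 < δ := by linarith
  have hqe : 0 < q * ε := by positivity
  have hqe2 : q * ε ≤ 2 := by nlinarith
  have h1 : ε * d * (u + δ) ≤ 4 / 3 * (1 + δ) := by
    have a1 : 3 * (ε * u) ≤ d := by nlinarith [mul_pos hε (by linarith : (0 : ℝ) < u)]
    have a2 : 3 * ε ≤ 2 := by nlinarith
    have a3 : ε * u * d ≤ 4 / 3 := by nlinarith [mul_pos hε (by linarith : (0 : ℝ) < u)]
    have a4 : ε * d ≤ 4 / 3 := by nlinarith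
    nlinarith
  have h2 : q * ε * (u + δ) ^ 2 - d * (u + δ) ≤ 2 * δ + 2 * δ ^ 2 := by
    have : q * ε * (u + δ) ^ 2 - d * (u + δ) = d * δ + q * ε * δ ^ 2 := by rw [← hu]; ring
    nlinarith [sq_nonneg δ]
  have h3 : 1 + 0.69 * (3 * δ ^ 2) ≤
      (2 : ℝ) ^ (-q * (u - 1) ^ 2) * 2 ^ (q * (u + δ - 1) ^ 2) := by
    rw [← Real.rpow_add (by norm_num)]
    refine le_trans ((two_rpow_ge (3 * δ ^ 2)).resolve_right (by have := sq_nonneg δ; linarith)) ?_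
    apply Real.rpow_le_rpow_of_exponent_le (by norm_num)
    have : -q * (u - 1) ^ 2 + q * (u + δ - 1) ^ 2 = q * (δ ^ 2 + 2 * (δ * (u - 1))) := by ring
    rw [this]
    have : 0 ≤ δ * (u - 1) := mul_nonneg hδ.le (by linarith)
    nlinarith [sq_nonneg δ]
  nlinarith [sq_nonneg (δ - 0.9)]

lemma E_tiny (q d ε u : ℝ) (m : ℕ) (hq : 3 ≤ q) (hd1 : 1 ≤ d) (hε : 0 < ε)
    (hεq : ε * (q - 1) < 1)
    (hu : q * ε * u = d) (hu1 : u < 1) :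
    -(2 * (2 : ℝ) ^ (-q * (u - 1) ^ 2) * 2 ^ (q * (m : ℝ) ^ 2))
      + (q * ε * (m + 1 : ℝ) ^ 2 - d * (m + 1) + ε * d * (m + 1)) ≤ - (m : ℝ) := by
  have hqe : 0 < q * ε := by positivity
  have hu0 : 0 < u := by
    by_contra h
    push Not at h
    nlinarith
  have hε2 : ε ≤ 1 / 2 := by nlinarith
  have hqe2 : q * ε ≤ 3 / 2 := by nlinarith
  have hd : d ≤ q * ε := by nlinarith
  have hqu : q * (1 - u) ≤ 1 := by
    have : (q - 1) ≤ q * u := by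
      by_contra h
      push Not at h
      nlinarith
    linarith
  have hq2 : q * (u - 1) ^ 2 ≤ 1 / 3 := by
    have h1 : (1 - u) ≤ 1 / 3 := by nlinarith
    nlinarith
  have hm : (m : ℝ) ≤ (m : ℝ) ^ 2 := by exact_mod_cast Nat.le_self_pow (by norm_num) m
  have hm0 : (0 : ℝ) ≤ m := by positivity
  have h3 : 3 / 4 * (1 + 7 * (m : ℝ) ^ 2) ≤
      (2 : ℝ) ^ (-q * (u - 1) ^ 2) * 2 ^ (q * (m : ℝ) ^ 2) := by
    apply mul_le_mul _ _ (by positivity) (by positivity)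
    · refine two_rpow_13.trans ?_
      apply Real.rpow_le_rpow_of_exponent_le (by norm_num)
      linarith
    · have hb := one_add_mul_le_pow (a := (7 : ℝ)) (by norm_num) (m ^ 2)
      calc 1 + 7 * (m : ℝ) ^ 2 ≤ (1 + 7) ^ (m ^ 2) := by push_cast at hb; linarith
        _ = (2 : ℝ) ^ ((3 : ℝ) * (m : ℝ) ^ 2) := by
          rw [Real.rpow_mul (by norm_num)]
          have : ((m : ℝ) ^ 2) = ((m ^ 2 : ℕ) : ℝ) := by push_cast; rfl
          rw [this, Real.rpow_natCast]; norm_num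
        _ ≤ _ := by
          apply Real.rpow_le_rpow_of_exponent_le (by norm_num)
          nlinarith [sq_nonneg (m : ℝ)]
  have h4 : q * ε * (m + 1 : ℝ) ^ 2 - d * (m + 1) + ε * d * (m + 1)
      ≤ 3 / 2 * (m + 1) * (3 / 2 * (m + 1) - 1 / 2) := by
    have a1 : ε * d * (m + 1) ≤ 1 / 2 * d * (m + 1) := by gcongr
    have a2 : 1 * (m + 1) ≤ d * (m + 1) := by gcongr
    have a3 : q * ε * (m + 1 : ℝ) ^ 2 ≤ 3 / 2 * (m + 1) ^ 2 := by gcongr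
    nlinarith
  nlinarith

lemma sum_down (n M : ℕ) :
    ∑ s ∈ Finset.range M, (if s ≤ n then (3 / 4 : ℝ) ^ (n - s) else 0)
      ≤ 4 * (3 / 4) ^ (n + 1 - M) := by
  induction M with
  | zero => simp; positivity
  | succ M ih =>
    rw [Finset.sum_range_succ]
    split_ifs with h
    · rw [show n + 1 - M = (n - M) + 1 by omega, pow_succ] at ih
      rw [show n + 1 - (M + 1) = n - M by omega]
      linarith
    · rw [show n + 1 - M = 0 by omega] at ih
      rw [show n + 1 - (M + 1) = 0 by omega]
      linarith

lemma sum_up (n M : ℕ) :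
    ∑ s ∈ Finset.range M, (if s ≤ n then 0 else (3 / 4 : ℝ) ^ (s - (n + 1)))
      ≤ 4 - 4 * (3 / 4) ^ (M - (n + 1)) := by
  induction M with
  | zero => simp
  | succ M ih =>
    rw [Finset.sum_range_succ]
    split_ifs with h
    · rw [show M - (n + 1) = 0 by omega] at ih
      rw [show M + 1 - (n + 1) = 0 by omega]
      linarith
    · rw [show M + 1 - (n + 1) = M - (n + 1) + 1 by omega, pow_succ]
      linarith

lemma sum_geo (M : ℕ) (r : ℝ) (hr0 : 0 ≤ r) (hr : r < 1) :
    ∑ s ∈ Finset.range M, r ^ s ≤ 1 / (1 - r) := by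
  rw [le_div_iff₀ (by linarith), geom_sum_mul_neg]
  have := pow_nonneg hr0 M
  linarith

/-- The bound on the contribution of `J_m`. -/
lemma T_bound (q d ε u : ℝ) (m : ℕ) (hq : 3 ≤ q) (hd1 : 1 ≤ d) (hd2 : d ≤ 2) (hε : 0 < ε)
    (hεq : ε * (q - 1) < 1) (hu : q * ε * u = d) :
    (2 : ℝ) ^ (-(2 * (2 : ℝ) ^ (-q * (u - 1) ^ 2) * 2 ^ (q * (m : ℝ) ^ 2))
      + (q * ε * (m + 1 : ℝ) ^ 2 - d * (m + 1) + ε * d * (m + 1))) ≤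
    3 * (3 / 4) ^ (m + 1) + 4 * (if m + 1 ≤ ⌊u⌋₊ then (3 / 4 : ℝ) ^ (⌊u⌋₊ - (m + 1)) else 0)
      + 4 * (if m + 1 ≤ ⌊u⌋₊ then 0 else (3 / 4 : ℝ) ^ (m + 1 - (⌊u⌋₊ + 1))) := by
  have hu0 : 0 < u := by
    have : 0 < q * ε := by positivity
    by_contra h
    push Not at h
    nlinarith
  have hr1 : (0 : ℝ) ≤ (3 / 4) ^ (m + 1) := by positivity
  rcases lt_or_ge u 1 with hu1 | hu1
  · have hn : ⌊u⌋₊ = 0 := Nat.floor_eq_zero.mpr hu1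
    have hE := E_tiny q d ε u m hq hd1 hε hεq hu hu1
    rw [hn, if_neg (by omega), if_neg (by omega)]
    have := Real.rpow_le_rpow_of_exponent_le (x := 2) (by norm_num) hE
    have h2 : (2 : ℝ) ^ (-(m : ℝ)) ≤ (3 / 4) ^ m := by
      refine le_trans ?_ (rpow_neg_half_le m m le_rfl)
      apply Real.rpow_le_rpow_of_exponent_le (by norm_num)
      have : (0 : ℝ) ≤ m := by positivity
      linarith
    have hr2 : (0 : ℝ) ≤ (3 / 4) ^ m := by positivity
    rw [show m + 1 - (0 + 1) = m by omega]
    linarith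
  · by_cases hs : m + 1 ≤ ⌊u⌋₊
    · rw [if_pos hs, if_pos hs]
      have hsu : ((m + 1 : ℕ) : ℝ) ≤ u := (Nat.le_floor_iff hu0.le).mp hs
      push_cast at hsu
      have hfl : ((⌊u⌋₊ : ℕ) : ℝ) ≤ u := Nat.floor_le hu0.le
      have hpos : 0 ≤ 2 * (2 : ℝ) ^ (-q * (u - 1) ^ 2) * 2 ^ (q * (m : ℝ) ^ 2) := by positivity
      have hr2 : (0 : ℝ) ≤ (3 / 4 : ℝ) ^ (⌊u⌋₊ - (m + 1)) := by positivity
      rcases E_small q d ε u (m + 1) hq hd1 hd2 hε hu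
        (by have : (0 : ℝ) ≤ m := by positivity
            linarith) hsu with h | h
      · have := Real.rpow_le_rpow_of_exponent_le (x := 2) (by norm_num)
          (show -(2 * (2 : ℝ) ^ (-q * (u - 1) ^ 2) * 2 ^ (q * (m : ℝ) ^ 2))
      + (q * ε * (m + 1 : ℝ) ^ 2 - d * (m + 1) + ε * d * (m + 1)) ≤ 4 / 3 + -((m + 1) / 2)
            by linarith)
        rw [Real.rpow_add (by norm_num) (4 / 3)] at this
        have h2 := rpow_neg_half_le (m + 1) (m + 1) (by push_cast; rfl)
        have h3 := mul_le_mul two_rpow_43 h2 (by positivity) (by norm_num)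
        linarith
      · have := Real.rpow_le_rpow_of_exponent_le (x := 2) (by norm_num)
          (show -(2 * (2 : ℝ) ^ (-q * (u - 1) ^ 2) * 2 ^ (q * (m : ℝ) ^ 2))
      + (q * ε * (m + 1 : ℝ) ^ 2 - d * (m + 1) + ε * d * (m + 1)) ≤ 4 / 3 + -((u - (m + 1)) / 2)
            by linarith)
        rw [Real.rpow_add (by norm_num) (4 / 3)] at this
        have h2 := rpow_neg_half_le (⌊u⌋₊ - (m + 1)) (u - (m + 1))
          (by rw [Nat.cast_sub hs]; push_cast; linarith)
        have h3 := mul_le_mul two_rpow_43 h2 (by positivity) (by norm_num)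
        linarith
    · rw [if_neg hs, if_neg hs]
      push Not at hs
      have hsu : u < ((m + 1 : ℕ) : ℝ) := (Nat.floor_lt hu0.le).mp hs
      have hE := E_large q d ε u ((m + 1 : ℕ) : ℝ) hq hd1 hd2 hε hu hu1 hsu
      have hfl : u < ⌊u⌋₊ + 1 := Nat.lt_floor_add_one u
      push_cast at hE
      rw [add_sub_cancel_right] at hE
      have := Real.rpow_le_rpow_of_exponent_le (x := 2) (by norm_num) hE
      rw [sub_eq_add_neg 2, Real.rpow_add (by norm_num) 2] at this
      have h2 := rpow_neg_half_le (m + 1 - (⌊u⌋₊ + 1)) (m + 1 - u)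
          (by rw [Nat.cast_sub hs]; push_cast; linarith)
      have h4 : (2 : ℝ) ^ (2 : ℝ) = 4 := by norm_num
      rw [h4] at this
      linarith

lemma T_sum (q d ε u : ℝ) (M : ℕ) (hq : 3 ≤ q) (hd1 : 1 ≤ d) (hd2 : d ≤ 2) (hε : 0 < ε)
    (hεq : ε * (q - 1) < 1) (hu : q * ε * u = d) :
    ∑ m ∈ Finset.range M, (2 : ℝ) ^ (-(2 * (2 : ℝ) ^ (-q * (u - 1) ^ 2) * 2 ^ (q * (m : ℝ) ^ 2))
      + (q * ε * (m + 1 : ℝ) ^ 2 - d * (m + 1) + ε * d * (m + 1))) ≤ 100 := by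
  refine le_trans (Finset.sum_le_sum (fun m _ => T_bound q d ε u m hq hd1 hd2 hε hεq hu)) ?_
  rw [Finset.sum_add_distrib, Finset.sum_add_distrib, ← Finset.mul_sum, ← Finset.mul_sum,
    ← Finset.mul_sum]
  set n := ⌊u⌋₊
  have h1 := sum_geo (M + 1) (3 / 4) (by norm_num) (by norm_num)
  have h2 := sum_down n (M + 1)
  have h3 := sum_up n (M + 1)
  rw [Finset.sum_range_succ'] at h1 h2 h3
  have h2' : (3 / 4 : ℝ) ^ (n + 1 - (M + 1)) ≤ 1 := pow_le_one₀ (by norm_num) (by norm_num)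
  have h3' : (0 : ℝ) ≤ (3 / 4 : ℝ) ^ (M + 1 - (n + 1)) := by positivity
  have h2'' : (0 : ℝ) ≤ (if 0 ≤ n then (3 / 4 : ℝ) ^ (n - 0) else 0) := by positivity
  have h3'' : (if 0 ≤ n then 0 else (3 / 4 : ℝ) ^ (0 - (n + 1))) = 0 := by simp
  norm_num at h1
  linarith

lemma block_bound (q : ℕ) (Ξ : ℤ) (hq : 3 ≤ q) (hqΞ : 1 ≤ (q : ℤ) + Ξ)
    (hpow : (q : ℤ) + 1 + Ξ ≤ 2 ^ (q - 1)) (ξ τ lam : ℝ) (hξ1 : 1 ≤ (Ξ : ℝ) - 2 * ξ)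
    (hlam : 0 ≤ lam) (hτ : 1 / 2 ≤ τ) (s : ℕ) :
    ∑ k ∈ Finset.Ico (PP q s) (PP q (s + 1)),
      (2 : ℝ) ^ (-lam * (k : ℝ) - τ * (Nf q Ξ k : ℝ) + τ * ξ * (Bf q Ξ k : ℝ)) ≤
    (2 : ℝ) ^ (τ * ξ) * (1 / 2) ^ s * 4 +
      (2 : ℝ) ^ (-(lam * 2 ^ ((q : ℝ) * (s : ℝ) ^ 2)) +
        ((q : ℝ) * (1 - τ) * (s + 1 : ℝ) ^ 2 - (Ξ - 2 * ξ) * (s + 1)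
          + (1 - τ) * (Ξ - 2 * ξ) * (s + 1))) := by
  obtain ⟨hN, hB⟩ := NB_start q Ξ hq hqΞ hpow s
  have hlt := PP_LL_lt q Ξ hq hqΞ hpow s
  have hq' : (3 : ℝ) ≤ q := by exact_mod_cast hq
  have hs : (s : ℝ) ≤ (s : ℝ) ^ 2 := by exact_mod_cast Nat.le_self_pow (by norm_num) s
  have hs0 : (0 : ℝ) ≤ s := by positivity
  rw [← Finset.sum_Ico_consecutive _ (show PP q s ≤ PP q s + LL q Ξ s by omega) hlt.le]
  apply add_le_add
  · rw [Finset.sum_Ico_eq_sum_range, Nat.add_sub_cancel_left]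
    have hg := sum_geo (LL q Ξ s) (3 / 4) (by norm_num) (by norm_num)
    norm_num at hg
    refine le_trans (Finset.sum_le_sum (g := fun i => (2 : ℝ) ^ (τ * ξ) * (1 / 2) ^ s * (3 / 4) ^ i)
      ?_) ?_
    · intro i hi
      rw [Finset.mem_range] at hi
      obtain ⟨h1, h2⟩ := NB_I q Ξ hq hqΞ hpow s hN hB i hi
      have h1' : (Nf q Ξ (PP q s + i) : ℝ) = q * s ^ 2 + Ξ * s + 1 + i := by exact_mod_cast h1
      rw [h1', h2]
      have e1 : (2 : ℝ) ^ (-(s : ℝ)) = (1 / 2) ^ s := by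
        rw [Real.rpow_neg (by norm_num), Real.rpow_natCast]; simp
      have e2 := rpow_neg_half_le i i le_rfl
      calc _ ≤ (2 : ℝ) ^ (τ * ξ + -(s : ℝ) + -((i : ℝ) / 2)) := by
            apply Real.rpow_le_rpow_of_exponent_le (by norm_num)
            have a0 : 0 ≤ lam * ((PP q s + i : ℕ) : ℝ) := by positivity
            have a1 : 1 / 2 * (i : ℝ) ≤ τ * i := by gcongr
            have a2 : 2 * (s : ℝ) ≤ q * s ^ 2 + (Ξ - 2 * ξ) * s := by nlinarith
            have a3 : 1 / 2 * (2 * (s : ℝ)) ≤ τ * (q * s ^ 2 + (Ξ - 2 * ξ) * s) := by gcongr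
            push_cast at a0 ⊢
            nlinarith
        _ = (2 : ℝ) ^ (τ * ξ) * (1 / 2) ^ s * (2 : ℝ) ^ (-((i : ℝ) / 2)) := by
            rw [Real.rpow_add (by norm_num), Real.rpow_add (by norm_num), e1]
        _ ≤ _ := by gcongr
    · rw [← Finset.mul_sum]
      gcongr
  · have hb : ∀ k ∈ Finset.Ico (PP q s + LL q Ξ s) (PP q (s + 1)),
        (2 : ℝ) ^ (-lam * (k : ℝ) - τ * (Nf q Ξ k : ℝ) + τ * ξ * (Bf q Ξ k : ℝ)) ≤
        (2 : ℝ) ^ (-(lam * 2 ^ ((q : ℝ) * (s : ℝ) ^ 2))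
          - τ * (q * (s + 1) ^ 2 + (Ξ - 2 * ξ) * (s + 1))) := by
      intro k hk
      rw [Finset.mem_Ico] at hk
      obtain ⟨i, rfl⟩ := Nat.exists_eq_add_of_le hk.1
      obtain ⟨h1, h2⟩ := NB_J q Ξ hq hqΞ hpow s hN hB i hk.2
      have h1' : (Nf q Ξ (PP q s + LL q Ξ s + i) : ℝ) = q * (s + 1) ^ 2 + Ξ * (s + 1) := by
        exact_mod_cast h1
      rw [h1', h2]
      apply Real.rpow_le_rpow_of_exponent_le (by norm_num)
      have hr := rpow_Qf q s
      unfold Qf at hr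
      push_cast at hr
      rw [hr]
      have : lam * (PP q s : ℝ) ≤ lam * ((PP q s + LL q Ξ s + i : ℕ) : ℝ) := by
        apply mul_le_mul_of_nonneg_left _ hlam
        exact_mod_cast (by omega)
      push_cast at this ⊢
      nlinarith
    refine le_trans (Finset.sum_le_card_nsmul _ _ _ hb) ?_
    rw [nsmul_eq_mul, Nat.card_Ico]
    have hc : ((PP q (s + 1) - (PP q s + LL q Ξ s) : ℕ) : ℝ) ≤ (2 : ℝ) ^ ((q : ℝ) * (s + 1) ^ 2) := by
      have hr := rpow_Qf q (s + 1)
      unfold Qf at hr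
      push_cast at hr
      rw [hr]
      exact_mod_cast Nat.sub_le _ _
    refine le_trans (mul_le_mul_of_nonneg_right hc (by positivity)) ?_
    rw [← Real.rpow_add (by norm_num)]
    apply le_of_eq
    congr 1
    ring

lemma le_PP (q : ℕ) (hq : 3 ≤ q) (n : ℕ) : n ≤ PP q n := by
  have h1 : n < 2 ^ n := Nat.lt_two_pow_self
  have h2 : 2 ^ n ≤ PP q n := by
    unfold PP
    apply Nat.pow_le_pow_right (by norm_num)
    nlinarith [Nat.le_self_pow (two_ne_zero) n]
  omega

theorem stmt9 (Ξ q : ℤ) (hq : 3 ≤ q) (hqΞ : 1 ≤ q + Ξ)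
    (hpow : (q : ℝ) + 1 + (Ξ : ℝ) ≤ (2 : ℝ) ^ ((q : ℝ) - 1))
    (ξ : ℝ) (hξ1 : 1 ≤ (Ξ : ℝ) - 2 * ξ) (hξ2 : (Ξ : ℝ) - 2 * ξ ≤ 2) :
    ∀ τ : ℝ, ((q : ℝ) - 2) / ((q : ℝ) - 1) < τ → τ < 1 →
      Pi2 q Ξ ξ τ
          (2 * (2 : ℝ) ^ (-(q : ℝ) *
            (((Ξ : ℝ) - 2 * ξ) / ((q : ℝ) * (1 - τ)) - 1) ^ 2)) ≤
        ENNReal.ofReal (10 * (2 : ℝ) ^ (τ * ξ) + 101) := by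

  intro τ hτ1 hτ2
  lift q to ℕ using by omega
  have hq' : (3 : ℝ) ≤ q := by exact_mod_cast hq
  have hqn : 3 ≤ q := by exact_mod_cast hq
  push_cast at *
  have hpow' : (q : ℤ) + 1 + Ξ ≤ 2 ^ (q - 1) := by
    have e : (2 : ℝ) ^ ((q : ℝ) - 1) = 2 ^ (q - 1) := by
      rw [← Real.rpow_natCast, Nat.cast_sub (by omega)]; simp
    rw [e] at hpow
    exact_mod_cast hpow
  have hε : 0 < 1 - τ := by linarith
  have hεq : (1 - τ) * ((q : ℝ) - 1) < 1 := by
    rw [div_lt_iff₀ (by linarith)] at hτ1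
    linarith
  have hτ : 1 / 2 ≤ τ := by nlinarith
  set u : ℝ := ((Ξ : ℝ) - 2 * ξ) / ((q : ℝ) * (1 - τ)) with hu_def
  have hu : (q : ℝ) * (1 - τ) * u = (Ξ : ℝ) - 2 * ξ := by
    rw [hu_def]; field_simp
  set lam : ℝ := 2 * (2 : ℝ) ^ (-(q : ℝ) * (u - 1) ^ 2) with hlam_def
  have hlam : 0 ≤ lam := by positivity
  unfold Pi2
  apply ENNReal.tsum_le_of_sum_range_le
  intro n
  rw [← ENNReal.ofReal_sum_of_nonneg (fun i _ => by positivity)]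
  apply ENNReal.ofReal_le_ofReal
  set f : ℕ → ℝ := fun k =>
    (2 : ℝ) ^ (-lam * (k : ℝ) - τ * (Nf q Ξ k : ℝ) + τ * ξ * (Bf q Ξ k : ℝ)) with hf
  have hsum : ∀ S : ℕ, ∑ k ∈ Finset.range (PP q S), f k =
      f 0 + ∑ s ∈ Finset.range S, ∑ k ∈ Finset.Ico (PP q s) (PP q (s + 1)), f k := by
    intro S
    induction S with
    | zero => simp [PP]
    | succ S ih =>
      rw [Finset.sum_range_succ, ← add_assoc, ← ih,
        Finset.sum_range_add_sum_Ico _ (PP_mono q (Nat.le_succ S))]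
  have h0 : f 0 = 1 := by simp [hf, Nf, Bf]
  calc ∑ k ∈ Finset.range n, f k ≤ ∑ k ∈ Finset.range (PP q n), f k := by
        apply Finset.sum_le_sum_of_subset_of_nonneg
        · exact Finset.range_subset_range.mpr (le_PP q hqn n)
        · intro i _ _; positivity
    _ ≤ _ := by
        rw [hsum, h0]
        refine le_trans (add_le_add le_rfl (Finset.sum_le_sum (fun s _ =>
          block_bound q Ξ hqn hqΞ hpow' ξ τ lam hξ1 hlam hτ s))) ?_
        rw [Finset.sum_add_distrib, ← Finset.sum_mul, ← Finset.mul_sum]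
        have hT := T_sum q (Ξ - 2 * ξ) (1 - τ) u n hq' hξ1 hξ2 hε hεq hu
        have hg := sum_geo n (1 / 2) (by norm_num) (by norm_num)
        have hp : (0 : ℝ) < 2 ^ (τ * ξ) := by positivity
        norm_num at hg
        have hg' : ∑ s ∈ Finset.range n, (1 / 2 : ℝ) ^ s ≤ 2 := by simpa using hg
        nlinarith [mul_le_mul_of_nonneg_left hg' hp.le]
end
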